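/- arXiv:2509.24687 — 2 statements merged into one kernel-verified Lean document; each statement's English description precedes it below -/
import Mathlib

section
/- Let μ be a nonzero Borel measure on (0,∞) and define f : [0,∞) → [0,∞] by f(r) = ∫_{(0,∞)} exp(−παr) dμ(α). Assume that ∑_{γ ∈ Γ₂} f(‖γ − z‖²) < ∞ for every z ∈ ℝ² (in particular all sums below are finite). Then the infimum over z ∈ ℝ² of ∑_{λ ∈ Λ₂} f(‖λ − z‖²) is strictly greater than the infimum over z ∈ ℝ² of ∑_{γ ∈ Γ₂} f(‖γ − z‖²). -/
open Real MeasureTheory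
open scoped RealInnerProductSpace ENNReal

/-- The vector `(x, y)` in the Euclidean plane `ℝ²`. -/
noncomputable def vec2 (x y : ℝ) : EuclideanSpace ℝ (Fin 2) :=
  (WithLp.equiv 2 (Fin 2 → ℝ)).symm ![x, y]

/-- The hexagonal lattice `Λ₂` of density 1:
`Λ₂ = {√(2/√3)·(k + l/2, l·√3/2) : (k,l) ∈ ℤ²}`. -/
noncomputable def hexLattice : Set (EuclideanSpace ℝ (Fin 2)) :=
  {p | ∃ k l : ℤ,
    p = Real.sqrt (2 / Real.sqrt 3) • vec2 ((k : ℝ) + (l : ℝ) / 2) ((l : ℝ) * (Real.sqrt 3 / 2))}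

/-- The deep hole `z₀ = √(2/√3)·(1/2, 1/(2√3))` of the hexagonal lattice. -/
noncomputable def deepHole : EuclideanSpace ℝ (Fin 2) :=
  Real.sqrt (2 / Real.sqrt 3) • vec2 (1 / 2) (1 / (2 * Real.sqrt 3))

/-- The honeycomb structure `Γ₂ = √2·(Λ₂ ∪ (Λ₂ + z₀))` of density 1. -/
noncomputable def honeycomb : Set (EuclideanSpace ℝ (Fin 2)) :=
  (fun p => Real.sqrt 2 • p) '' (hexLattice ∪ (fun p => p + deepHole) '' hexLattice)

/-- one-dimensional periodized Gaussian -/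
noncomputable def gP (a x : ℝ) : ℝ := ∑' k : ℤ, Real.exp (-π * ((k : ℝ) + x) ^ 2 * a)

noncomputable def gE (t x : ℝ) : ℝ :=
  ∑' n : ℤ, Real.exp (-π * (2 * (n : ℝ)) ^ 2 * t) * Real.cos (2 * π * x * (2 * n))

noncomputable def gO (t x : ℝ) : ℝ :=
  ∑' n : ℤ, Real.exp (-π * (2 * (n : ℝ) + 1) ^ 2 * t) * Real.cos (2 * π * x * (2 * n + 1))

lemma gP_summable {a : ℝ} (ha : 0 < a) (x : ℝ) :
    Summable fun k : ℤ => Real.exp (-π * ((k : ℝ) + x) ^ 2 * a) :=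
  (HurwitzZeta.hasSum_int_evenKernel x ha).summable

noncomputable def evenOdd : ℤ ⊕ ℤ ≃ ℤ :=
  Equiv.ofBijective (Sum.elim (fun n => 2 * n) (fun n => 2 * n + 1)) (by
    constructor
    · rintro (a | a) (b | b) h <;> simp at h ⊢ <;> omega
    · intro n
      rcases Int.even_or_odd' n with ⟨k, hk | hk⟩
      · exact ⟨Sum.inl k, by simp [hk]⟩
      · exact ⟨Sum.inr k, by simp [hk]⟩)

lemma tsum_int_even_odd (f : ℤ → ℝ) (hf : Summable f) :
    ∑' n, f n = ∑' n, f (2 * n) + ∑' n, f (2 * n + 1) := by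
  rw [← evenOdd.tsum_eq f]
  have h2 : Summable fun n => f (2 * n) :=
    hf.comp_injective (i := fun n : ℤ => 2 * n) (fun a b h => by simp at h; omega)
  have h3 : Summable fun n => f (2 * n + 1) :=
    hf.comp_injective (i := fun n : ℤ => 2 * n + 1) (fun a b h => by simp at h; omega)
  exact (HasSum.sum (f := fun c => f (evenOdd c)) h2.hasSum h3.hasSum).tsum_eq

lemma gW_summable {t : ℝ} (ht : 0 < t) (x : ℝ) :
    Summable fun n : ℤ => Real.exp (-π * (n : ℝ) ^ 2 * t) * Real.cos (2 * π * x * n) := by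
  have h := gP_summable ht 0
  simp only [add_zero] at h
  refine Summable.of_norm_bounded h (fun n => ?_)
  rw [norm_mul, Real.norm_eq_abs, Real.norm_eq_abs, abs_of_pos (Real.exp_pos _)]
  exact mul_le_of_le_one_right (Real.exp_pos _).le (Real.abs_cos_le_one _)

lemma gP_poisson {a : ℝ} (ha : 0 < a) (x : ℝ) :
    gP a x = 1 / √a * (gE (1 / a) x + gO (1 / a) x) := by
  have h1 : gP a x = HurwitzZeta.evenKernel x a := (HurwitzZeta.hasSum_int_evenKernel x ha).tsum_eq
  have ha' : 0 < 1 / a := by positivity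
  have h2 := Complex.hasSum_re (HurwitzZeta.hasSum_int_cosKernel x ha')
  have h3 : HasSum (fun n : ℤ => Real.exp (-π * (n : ℝ) ^ 2 * (1 / a)) * Real.cos (2 * π * x * n))
      (HurwitzZeta.cosKernel x (1 / a)) := by
    rw [Complex.ofReal_re] at h2
    convert h2 using 1
    ext n
    rw [Complex.re_mul_ofReal]
    have : (2 * π * Complex.I * x * n : ℂ) = ((2 * π * x * n : ℝ) : ℂ) * Complex.I := by
      push_cast; ring
    rw [this, Complex.exp_ofReal_mul_I_re, mul_comm]
  rw [h1, HurwitzZeta.evenKernel_functional_equation, ← h3.tsum_eq, Real.sqrt_eq_rpow,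
    tsum_int_even_odd _ h3.summable]
  simp only [gE, gO]
  push_cast
  rfl

lemma gE_shift (t x : ℝ) : gE t (x + 1 / 2) = gE t x := by
  unfold gE
  congr 1; ext n; congr 1
  rw [← Real.cos_add_int_mul_two_pi (2 * π * x * (2 * n)) n]
  congr 1; ring

lemma gO_shift (t x : ℝ) : gO t (x + 1 / 2) = - gO t x := by
  unfold gO
  rw [← tsum_neg]
  congr 1; ext n
  rw [← mul_neg]
  congr 1
  rw [← Real.cos_add_pi, ← Real.cos_add_int_mul_two_pi (2 * π * x * (2 * n + 1) + π) n]
  congr 1; ring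

lemma nat_tail (u : ℕ → ℝ) (k : ℕ) (c r : ℝ) (hr0 : 0 ≤ r) (hr : r < 1)
    (h : ∀ n, |u (n + k)| ≤ c * r ^ n) :
    Summable u ∧ |∑' n, u n - ∑ i ∈ Finset.range k, u i| ≤ c / (1 - r) := by
  have hg := (hasSum_geometric_of_lt_one hr0 hr).mul_left c
  have hs : Summable fun n => u (n + k) := Summable.of_norm_bounded hg.summable h
  have hs' : Summable u := (summable_nat_add_iff k).1 hs
  refine ⟨hs', ?_⟩
  rw [← hs'.sum_add_tsum_nat_add k, add_sub_cancel_left]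
  have := tsum_of_norm_bounded (f := fun n => u (n + k)) hg h
  rwa [Real.norm_eq_abs, ← div_eq_mul_inv] at this

lemma int_tail (f : ℤ → ℝ) (k l : ℕ) (c d r : ℝ) (hr0 : 0 ≤ r) (hr : r < 1)
    (h : ∀ n : ℕ, |f ((n + k : ℕ) : ℤ)| ≤ c * r ^ n)
    (h' : ∀ n : ℕ, |f (-(((n + l : ℕ) : ℤ) + 1))| ≤ d * r ^ n) :
    |∑' n, f n - (∑ i ∈ Finset.range k, f (i : ℤ) + ∑ i ∈ Finset.range l, f (-((i : ℤ) + 1)))|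
      ≤ (c + d) / (1 - r) := by
  obtain ⟨s1, b1⟩ := nat_tail (fun n => f (n : ℤ)) k c r hr0 hr h
  obtain ⟨s2, b2⟩ := nat_tail (fun n => f (-((n : ℤ) + 1))) l d r hr0 hr h'
  rw [tsum_of_nat_of_neg_add_one s1 s2, add_div]
  refine le_trans (le_of_eq ?_) ((abs_add_le _ _).trans (add_le_add b1 b2))
  congr 1; ring

lemma abs_exp_mul_cos_le (u v : ℝ) : |Real.exp u * Real.cos v| ≤ Real.exp u := by
  rw [abs_mul, abs_of_pos (Real.exp_pos _)]
  exact mul_le_of_le_one_right (Real.exp_pos _).le (Real.abs_cos_le_one _)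

/-- comparison of exponentials with powers -/
lemma exp_le_mul_pow (w C u v : ℝ) (n : ℕ) (hC : C = Real.exp v) (h : u ≤ v - w * n) :
    Real.exp u ≤ C * Real.exp (-w) ^ n := by
  rw [hC, ← Real.exp_nat_mul, ← Real.exp_add]
  apply Real.exp_le_exp.2
  nlinarith

lemma gE_bound0 {t : ℝ} (ht : 0 < t) (x : ℝ) :
    |gE t x - 1| ≤ 2 * Real.exp (-(4 * π * t)) / (1 - Real.exp (-(4 * π * t))) := by
  have hw : 0 < 4 * π * t := by positivity
  have := int_tail (fun n : ℤ => Real.exp (-π * (2 * (n : ℝ)) ^ 2 * t) * Real.cos (2 * π * x * (2 * n)))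
    1 0 (Real.exp (-(4 * π * t))) (Real.exp (-(4 * π * t))) (Real.exp (-(4 * π * t)))
    (Real.exp_pos _).le (by rw [Real.exp_lt_one_iff]; linarith)
    (fun n => by
      refine (abs_exp_mul_cos_le _ _).trans ?_
      refine exp_le_mul_pow (4 * π * t) _ _ (-(4 * π * t) * 1) n ?_ ?_
      · rw [mul_one]
      · push_cast
        have : (0 : ℝ) ≤ 4 * π * t * (n ^ 2 + 1 * n) := by positivity
        nlinarith)
    (fun n => by
      refine (abs_exp_mul_cos_le _ _).trans ?_
      refine exp_le_mul_pow (4 * π * t) _ _ (-(4 * π * t) * 1) n ?_ ?_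
      · rw [mul_one]
      · push_cast
        have : (0 : ℝ) ≤ 4 * π * t * (n ^ 2 + 1 * n) := by positivity
        nlinarith)
  rw [← two_mul] at this
  simpa [gE] using this

lemma gE_bound1 {t : ℝ} (ht : 0 < t) (x : ℝ) :
    |gE t x - (1 + 2 * Real.exp (-(4 * π * t)) * Real.cos (4 * π * x))|
      ≤ 2 * Real.exp (-(4 * π * t)) ^ 4 / (1 - Real.exp (-(4 * π * t))) := by
  have hw : 0 < 4 * π * t := by positivity
  have := int_tail (fun n : ℤ => Real.exp (-π * (2 * (n : ℝ)) ^ 2 * t) * Real.cos (2 * π * x * (2 * n)))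
    2 1 (Real.exp (-(4 * π * t)) ^ 4) (Real.exp (-(4 * π * t)) ^ 4) (Real.exp (-(4 * π * t)))
    (Real.exp_pos _).le (by rw [Real.exp_lt_one_iff]; linarith)
    (fun n => by
      refine (abs_exp_mul_cos_le _ _).trans ?_
      refine exp_le_mul_pow (4 * π * t) _ _ (-(4 * π * t) * 4) n ?_ ?_
      · rw [← Real.exp_nat_mul]; push_cast; ring_nf
      · push_cast
        have : (0 : ℝ) ≤ 4 * π * t * (n ^ 2 + 3 * n) := by positivity
        nlinarith)
    (fun n => by
      refine (abs_exp_mul_cos_le _ _).trans ?_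
      refine exp_le_mul_pow (4 * π * t) _ _ (-(4 * π * t) * 4) n ?_ ?_
      · rw [← Real.exp_nat_mul]; push_cast; ring_nf
      · push_cast
        have : (0 : ℝ) ≤ 4 * π * t * (n ^ 2 + 3 * n) := by positivity
        nlinarith)
  have e1 : 2 * π * x * (2 * (-(0 + 1 : ℝ))) = -(4 * π * x) := by ring
  have e2 : 2 * π * x * (2 * (1 : ℝ)) = (4 * π * x) := by ring
  have e3 : -π * (2 * (-(0 + 1 : ℝ))) ^ 2 * t = -(4 * π * t) := by ring
  have e4 : -π * (2 * (1 : ℝ)) ^ 2 * t = -(4 * π * t) := by ring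
  simp only [Finset.sum_range_succ, Finset.sum_range_zero, zero_add, Nat.cast_zero, Int.cast_zero,
    Nat.cast_one, Int.cast_one, Int.cast_neg, Int.cast_add] at this
  simp only [zero_add] at e1 e3
  rw [e1, e2, e3, e4, Real.cos_neg] at this
  unfold gE
  convert this using 2
  · norm_num; ring
  · ring

lemma gO_bound {t : ℝ} (ht : 0 < t) (x : ℝ) :
    |gO t x - 2 * Real.exp (-(π * t)) * Real.cos (2 * π * x)|
      ≤ 2 * Real.exp (-(π * t)) * (Real.exp (-(4 * π * t)) ^ 2 / (1 - Real.exp (-(4 * π * t)))) := by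
  have hw : 0 < 4 * π * t := by positivity
  have key : ∀ n : ℕ, Real.exp (-(4 * π * t) * ((n + 3 / 2 : ℝ) ^ 2)) ≤
      Real.exp (-(π * t)) * Real.exp (-(4 * π * t)) ^ 2 * Real.exp (-(4 * π * t)) ^ n := fun n => by
    refine exp_le_mul_pow (4 * π * t) _ _ (-(4 * π * t) * (9 / 4)) n ?_ ?_
    · rw [← Real.exp_nat_mul, ← Real.exp_add]; push_cast; ring_nf
    · have : (0 : ℝ) ≤ 4 * π * t * (n ^ 2 + 2 * n) := by positivity
      nlinarith
  have := int_tail (fun n : ℤ => Real.exp (-π * (2 * (n : ℝ) + 1) ^ 2 * t) *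
      Real.cos (2 * π * x * (2 * n + 1)))
    1 1 (Real.exp (-(π * t)) * Real.exp (-(4 * π * t)) ^ 2)
     (Real.exp (-(π * t)) * Real.exp (-(4 * π * t)) ^ 2) (Real.exp (-(4 * π * t)))
    (Real.exp_pos _).le (by rw [Real.exp_lt_one_iff]; linarith)
    (fun n => by
      refine (abs_exp_mul_cos_le _ _).trans ?_
      refine le_trans (le_of_eq ?_) (key n)
      congr 1
      push_cast; ring)
    (fun n => by
      refine (abs_exp_mul_cos_le _ _).trans ?_
      refine le_trans (le_of_eq ?_) (key n)
      congr 1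
      push_cast; ring)
  have e1 : 2 * π * x * (2 * (-1 : ℝ) + 1) = -(2 * π * x) := by ring
  have e3 : -π * (2 * (-1 : ℝ) + 1) ^ 2 * t = -(π * t) := by ring
  simp only [Finset.sum_range_succ, Finset.sum_range_zero, zero_add, Nat.cast_zero, Int.cast_zero,
    Int.cast_one, Int.cast_neg, Int.cast_add] at this
  rw [e1, e3, Real.cos_neg] at this
  unfold gO
  convert this using 2
  · norm_num; ring
  · ring

noncomputable def hs : ℝ := 2 / √3

lemma hs_pos : 0 < hs := by unfold hs; positivity

lemma hs_sq : hs * hs = 4 / 3 := by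
  have h3 : √3 * √3 = (3 : ℝ) := Real.mul_self_sqrt (by norm_num)
  have : √3 ≠ (0 : ℝ) := by positivity
  unfold hs; field_simp; nlinarith

lemma hs_gt : 1.15 < hs := by
  have := hs_sq; have := hs_pos; nlinarith

noncomputable def th (α x y : ℝ) : ℝ :=
  gP (α * hs) x * gP (3 * (α * hs)) y + gP (α * hs) (x + 1 / 2) * gP (3 * (α * hs)) (y + 1 / 2)

lemma th_fourier {α : ℝ} (hα : 0 < α) (x y : ℝ) :
    α * th α x y = gE (1 / (α * hs)) x * gE (1 / (3 * (α * hs))) y +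
      gO (1 / (α * hs)) x * gO (1 / (3 * (α * hs))) y := by
  have ha : 0 < α * hs := mul_pos hα hs_pos
  have h3 : √3 ≠ (0 : ℝ) := by positivity
  have h4 : √(α * hs) * √(3 * (α * hs)) = 2 * α := by
    rw [Real.sqrt_mul (x := 3) (by norm_num) (α * hs), mul_left_comm, Real.mul_self_sqrt ha.le]
    unfold hs; field_simp
  have h5 : 1 / √(α * hs) * (1 / √(3 * (α * hs))) = 1 / (2 * α) := by
    rw [← h4]; field_simp
  unfold th
  rw [gP_poisson ha, gP_poisson ha, gP_poisson (by positivity), gP_poisson (by positivity),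
    gE_shift, gE_shift, gO_shift, gO_shift]
  set A := 1 / √(α * hs)
  set B := 1 / √(3 * (α * hs))
  have h6 : 2 * α * (A * B) = 1 := by rw [h5]; field_simp
  linear_combination (gE (1 / (α * hs)) x * gE (1 / (3 * (α * hs))) y +
      gO (1 / (α * hs)) x * gO (1 / (3 * (α * hs))) y) * h6

lemma alg_bound (R p q e1 e2 o1 o2 c2 cx cy : ℝ) (hR : 0 < R) (hR' : R ≤ 0.36)
    (hp : 0 < p) (hq : 0 < q) (hpq : p * q = R) (h2 : |c2| ≤ 1) (hx : |cx| ≤ 1) (hy : |cy| ≤ 1)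
    (b1 : |e1 - 1| ≤ 2 * R ^ 3 / (1 - R ^ 3))
    (b2 : |e2 - (1 + 2 * R * c2)| ≤ 2 * R ^ 4 / (1 - R))
    (b3 : |o1 - 2 * p * cx| ≤ 2 * p * ((R ^ 3) ^ 2 / (1 - R ^ 3)))
    (b4 : |o2 - 2 * q * cy| ≤ 2 * q * (R ^ 2 / (1 - R))) :
    |e1 * e2 + o1 * o2 - (1 + 2 * R * c2 + 4 * R * cx * cy)| ≤ 13.2 * R ^ 3 := by
  have hR3 : R ^ 3 ≤ R := by
    have : R ^ 2 ≤ 1 := by nlinarith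
    nlinarith
  have k1 : ∀ u : ℝ, 0 ≤ u → u / (1 - R) ≤ 1.5625 * u := fun u hu => by
    rw [div_le_iff₀ (by linarith)]; nlinarith
  have k3 : ∀ u : ℝ, 0 ≤ u → u / (1 - R ^ 3) ≤ 1.5625 * u := fun u hu => by
    rw [div_le_iff₀ (by linarith)]; nlinarith
  obtain ⟨d1, rfl⟩ : ∃ d, e1 = 1 + d := ⟨e1 - 1, by ring⟩
  obtain ⟨d2, rfl⟩ : ∃ d, e2 = 1 + 2 * R * c2 + d := ⟨e2 - (1 + 2 * R * c2), by ring⟩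
  obtain ⟨d3, rfl⟩ : ∃ d, o1 = 2 * p * (cx + d) := ⟨o1 / (2 * p) - cx, by field_simp; ring⟩
  obtain ⟨d4, rfl⟩ : ∃ d, o2 = 2 * q * (cy + d) := ⟨o2 / (2 * q) - cy, by field_simp; ring⟩
  have c1 : |d1| ≤ 3.125 * R ^ 3 := by
    have := b1.trans (k3 _ (by positivity))
    rw [add_sub_cancel_left] at this; linarith
  have c2' : |d2| ≤ 3.125 * R ^ 4 := by
    have := b2.trans (k1 _ (by positivity))
    rw [add_sub_cancel_left] at this; linarith
  have c3 : |d3| ≤ 1.5625 * R ^ 6 := by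
    have e : 2 * p * (cx + d3) - 2 * p * cx = 2 * p * d3 := by ring
    rw [e, abs_mul, abs_of_pos (by positivity : 0 < 2 * p)] at b3
    have := (le_of_mul_le_mul_left b3 (by positivity)).trans (k3 _ (by positivity))
    linarith [this, (by ring : (R ^ 3) ^ 2 = R ^ 6)]
  have c4 : |d4| ≤ 1.5625 * R ^ 2 := by
    have e : 2 * q * (cy + d4) - 2 * q * cy = 2 * q * d4 := by ring
    rw [e, abs_mul, abs_of_pos (by positivity : 0 < 2 * q)] at b4
    exact (le_of_mul_le_mul_left b4 (by positivity)).trans (k1 _ (by positivity))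
  have e : (1 + d1) * (1 + 2 * R * c2 + d2) + 2 * p * (cx + d3) * (2 * q * (cy + d4)) -
      (1 + 2 * R * c2 + 4 * R * cx * cy) =
      d1 * (1 + 2 * R * c2 + d2) + d2 + 4 * R * (d3 * cy + cx * d4 + d3 * d4) := by
    linear_combination 4 * (cx + d3) * (cy + d4) * hpq
  rw [e]
  have f1 : |1 + 2 * R * c2 + d2| ≤ 1 + 2 * R + 3.125 * R ^ 4 := by
    rw [abs_le] at *
    constructor <;> nlinarith
  have f2 : |d1 * (1 + 2 * R * c2 + d2)| ≤ 3.125 * R ^ 3 * (1 + 2 * R + 3.125 * R ^ 4) := by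
    rw [abs_mul]; exact mul_le_mul c1 f1 (abs_nonneg _) (by positivity)
  have f3 : |d3 * cy| ≤ 1.5625 * R ^ 6 * 1 := by
    rw [abs_mul]; exact mul_le_mul c3 hy (abs_nonneg _) (by positivity)
  have f4 : |cx * d4| ≤ 1 * (1.5625 * R ^ 2) := by
    rw [abs_mul]; exact mul_le_mul hx c4 (abs_nonneg _) (by positivity)
  have f5 : |d3 * d4| ≤ 1.5625 * R ^ 6 * (1.5625 * R ^ 2) := by
    rw [abs_mul]; exact mul_le_mul c3 c4 (abs_nonneg _) (by positivity)
  have f6 : |4 * R * (d3 * cy + cx * d4 + d3 * d4)| ≤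
      4 * R * (1.5625 * R ^ 6 * 1 + 1 * (1.5625 * R ^ 2) + 1.5625 * R ^ 6 * (1.5625 * R ^ 2)) := by
    rw [abs_mul, abs_of_pos (by positivity : 0 < 4 * R)]
    refine mul_le_mul_of_nonneg_left ?_ (by positivity)
    exact (abs_add_three _ _ _).trans (by linarith)
  refine (abs_add_three _ _ _).trans ((add_le_add (add_le_add f2 c2') f6).trans ?_)
  have r4 : R ^ 4 ≤ 0.36 ^ 4 := by gcongr
  have r6 : R ^ 6 ≤ 0.36 ^ 6 := by gcongr
  have key : 3.125 * (1 + 2 * R + 3.125 * R ^ 4) + 3.125 * R + 6.25 * R ^ 4 + 6.25 +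
      9.765625 * R ^ 6 ≤ 13.2 := by
    norm_num at r4 r6 ⊢; linarith
  have := mul_le_mul_of_nonneg_left key (by positivity : 0 ≤ R ^ 3)
  refine le_trans (le_of_eq ?_) (this.trans (le_of_eq ?_)) <;> ring

lemma th_fourier_bound {α : ℝ} (hα : 0 < α) (x y : ℝ) (hR : Real.exp (-(π * hs / α)) ≤ 0.36) :
    |α * th α x y - (1 + 2 * Real.exp (-(π * hs / α)) * Real.cos (4 * π * y)
      + 4 * Real.exp (-(π * hs / α)) * Real.cos (2 * π * x) * Real.cos (2 * π * y))|
      ≤ 13.2 * Real.exp (-(π * hs / α)) ^ 3 := by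
  have hs0 := hs_pos
  have ha : 0 < α * hs := mul_pos hα hs_pos
  have t1 : 0 < 1 / (α * hs) := by positivity
  have t2 : 0 < 1 / (3 * (α * hs)) := by positivity
  have i1 : 4 * π * (1 / (3 * (α * hs))) = π * hs / α := by
    field_simp; linear_combination (-3) * hs_sq
  have i2 : 4 * π * (1 / (α * hs)) = 3 * (π * hs / α) := by
    rw [← i1]; field_simp
  have i3 : Real.exp (-(4 * π * (1 / (α * hs)))) = Real.exp (-(π * hs / α)) ^ 3 := by
    rw [i2, ← Real.exp_nat_mul]; push_cast; ring_nf
  have i4 : Real.exp (-(π * (1 / (α * hs)))) * Real.exp (-(π * (1 / (3 * (α * hs))))) =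
      Real.exp (-(π * hs / α)) := by
    rw [← Real.exp_add]; congr 1; linarith
  have b1 := gE_bound0 t1 x
  have b2 := gE_bound1 t2 y
  have b3 := gO_bound t1 x
  have b4 := gO_bound t2 y
  rw [i3] at b1 b3
  rw [i1] at b2 b4
  rw [th_fourier hα]
  exact alg_bound _ _ _ _ _ _ _ _ _ _ (Real.exp_pos _) hR (Real.exp_pos _) (Real.exp_pos _) i4
    (Real.abs_cos_le_one _) (Real.abs_cos_le_one _) (Real.abs_cos_le_one _) b1 b2 b3 b4

lemma gP_nonneg (a x : ℝ) : 0 ≤ gP a x := tsum_nonneg fun _ => (Real.exp_pos _).le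

lemma gP_upper {a x : ℝ} (ha : 0 < a) (hx : 0 ≤ x) (hx1 : x ≤ 1) :
    gP a x ≤ (Real.exp (-(π * a * x ^ 2)) + Real.exp (-(π * a * (1 - x) ^ 2))) /
      (1 - Real.exp (-(π * a))) := by
  have hw : 0 < π * a := by positivity
  have := int_tail (fun k : ℤ => Real.exp (-π * ((k : ℝ) + x) ^ 2 * a)) 0 0
    (Real.exp (-(π * a * x ^ 2))) (Real.exp (-(π * a * (1 - x) ^ 2))) (Real.exp (-(π * a)))
    (Real.exp_pos _).le (by rw [Real.exp_lt_one_iff]; linarith)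
    (fun n => by
      rw [abs_of_pos (Real.exp_pos _)]
      refine exp_le_mul_pow _ _ _ _ n rfl ?_
      push_cast
      have h1 : (n : ℝ) ≤ n ^ 2 := by exact_mod_cast Nat.le_self_pow two_ne_zero n
      have : 0 ≤ π * a * (n ^ 2 - n + 2 * n * x) :=
        mul_nonneg hw.le (by have : (0 : ℝ) ≤ n * x := by positivity
                             linarith)
      nlinarith)
    (fun n => by
      rw [abs_of_pos (Real.exp_pos _)]
      refine exp_le_mul_pow _ _ _ _ n rfl ?_
      push_cast
      have h1 : (n : ℝ) ≤ n ^ 2 := by exact_mod_cast Nat.le_self_pow two_ne_zero n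
      have : 0 ≤ π * a * (n ^ 2 - n + 2 * n * (1 - x)) :=
        mul_nonneg hw.le (by have : (0 : ℝ) ≤ n * (1 - x) := mul_nonneg n.cast_nonneg (by linarith)
                             linarith)
      nlinarith)
  simp only [Finset.range_zero, Finset.sum_empty, add_zero, sub_zero] at this
  exact (le_abs_self _).trans this

lemma gP_add_one (a x : ℝ) : gP a (x + 1) = gP a x := by
  unfold gP
  rw [← (Equiv.addRight (1 : ℤ)).tsum_eq (fun k : ℤ => Real.exp (-π * ((k : ℝ) + x) ^ 2 * a))]
  congr 1; ext k; simp only [Equiv.coe_addRight]; push_cast; ring_nf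

lemma gP_one_sub (a x : ℝ) : gP a (1 - x) = gP a x := by
  unfold gP
  rw [← (Equiv.subLeft (-1 : ℤ)).tsum_eq (fun k : ℤ => Real.exp (-π * ((k : ℝ) + x) ^ 2 * a))]
  congr 1; ext k; simp only [Equiv.subLeft_apply]; push_cast; ring_nf

lemma th_second (α : ℝ) : th α 1 (1 / 3) = th α (1 / 2) (1 / 6) := by
  unfold th
  have h1 : gP (α * hs) (1 + 1 / 2) = gP (α * hs) (1 / 2) := by rw [add_comm, gP_add_one]
  have h2 := gP_one_sub (3 * (α * hs)) (1 / 3)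
  have h3 := gP_one_sub (3 * (α * hs)) (1 / 6)
  norm_num at *
  rw [h1, h2, h3]; ring

lemma th_direct_upper {α : ℝ} (hα : 0 < α) (hd : Real.exp (-(π * α * hs / 3)) ≤ 1 / 7) :
    2 * th (2 * α) (1 / 2) (1 / 6) < Real.exp (-(π * α * hs / 3)) := by
  have hs0 := hs_pos
  have ha : 0 < 2 * α * hs := by positivity
  set g := Real.exp (-(π * α * hs / 6)) with hg
  have hg0 : 0 < g := Real.exp_pos _
  have hpow : ∀ (n : ℕ) (u : ℝ), u = n * (π * α * hs / 6) → Real.exp (-u) = g ^ n := by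
    intro n u hu; rw [hg, ← Real.exp_nat_mul, hu]; ring_nf
  rw [hpow 2 _ (by push_cast; ring)] at hd ⊢
  have u1 := gP_upper ha (x := 1 / 2) (by norm_num) (by norm_num)
  have u2 := gP_upper (a := 3 * (2 * α * hs)) (by positivity) (x := 1 / 6) (by norm_num) (by norm_num)
  have u3 := gP_upper ha (x := 1 / 2 + 1 / 2) (by norm_num) (by norm_num)
  have u4 := gP_upper (a := 3 * (2 * α * hs)) (by positivity) (x := 1 / 6 + 1 / 2) (by norm_num) (by norm_num)
  rw [hpow 3 _ (by push_cast; ring), hpow 3 _ (by push_cast; ring), hpow 12 _ (by push_cast; ring)] at u1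
  rw [hpow 1 _ (by push_cast; ring), hpow 25 _ (by push_cast; ring), hpow 36 _ (by push_cast; ring)] at u2
  rw [hpow 12 _ (by push_cast; ring), hpow 0 _ (by push_cast; ring), hpow 12 _ (by push_cast; ring)] at u3
  rw [hpow 16 _ (by push_cast; ring), hpow 4 _ (by push_cast; ring), hpow 36 _ (by push_cast; ring)] at u4
  have s12 : g ^ 12 ≤ (1 / 7) ^ 6 := by
    rw [show g ^ 12 = (g ^ 2) ^ 6 by ring]; gcongr
  have s24 : g ^ 24 ≤ (1 / 7) ^ 12 := by
    rw [show g ^ 24 = (g ^ 2) ^ 12 by ring]; gcongr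
  have s36 : g ^ 36 ≤ (1 / 7) ^ 18 := by
    rw [show g ^ 36 = (g ^ 2) ^ 18 by ring]; gcongr
  have p12 : 0 < 1 - g ^ 12 := by norm_num at s12; linarith
  have p36 : 0 < 1 - g ^ 36 := by norm_num at s36; linarith
  have v1 := mul_le_mul u1 u2 (gP_nonneg _ _) (by positivity)
  have v2 := mul_le_mul u3 u4 (gP_nonneg _ _) (by positivity)
  unfold th
  refine lt_of_le_of_lt (mul_le_mul_of_nonneg_left (add_le_add v1 v2) (by norm_num)) ?_
  have e : 2 * ((g ^ 3 + g ^ 3) / (1 - g ^ 12) * ((g ^ 1 + g ^ 25) / (1 - g ^ 36)) +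
      (g ^ 12 + g ^ 0) / (1 - g ^ 12) * ((g ^ 16 + g ^ 4) / (1 - g ^ 36))) =
      g ^ 2 * (2 * g ^ 2 * (2 * (1 + g ^ 24) + (1 + g ^ 12) ^ 2)) / ((1 - g ^ 12) * (1 - g ^ 36)) := by
    field_simp; ring
  rw [e, div_lt_iff₀ (by positivity)]
  refine mul_lt_mul_of_pos_left ?_ (by positivity)
  have w1 : 2 * (1 + g ^ 24) + (1 + g ^ 12) ^ 2 ≤ 3.1 := by
    have : (1 + g ^ 12) ^ 2 ≤ (1 + (1 / 7) ^ 6) ^ 2 := by gcongr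
    norm_num at *; linarith
  have w2 : (0.99 : ℝ) * 0.99 ≤ (1 - g ^ 12) * (1 - g ^ 36) := by
    norm_num at s12 s36
    exact mul_le_mul (by linarith) (by linarith) (by norm_num) p12.le
  have w3 : 2 * g ^ 2 * (2 * (1 + g ^ 24) + (1 + g ^ 12) ^ 2) ≤ 2 * (1 / 7) * 3.1 :=
    mul_le_mul (by linarith) w1 (by positivity) (by norm_num)
  norm_num at *; linarith

lemma cover_aux {a b : ℝ} (ha : 0 ≤ a) (ha' : a ≤ 1 / 2) (hb : 0 ≤ b) (hb' : b ≤ 1 / 2) :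
    a ^ 2 + 3 * b ^ 2 ≤ 1 / 3 ∨ (1 / 2 - a) ^ 2 + 3 * (1 / 2 - b) ^ 2 ≤ 1 / 3 := by
  rcases le_total b (1 / 6) with h | h
  · left; nlinarith
  rcases le_total b (1 / 3) with h' | h'
  · rcases le_total (a + 3 * b) 1 with h2 | h2
    · left; nlinarith
    · right; nlinarith
  · right; nlinarith

lemma near_int (x : ℝ) : ∃ k k' : ℤ, ∃ a : ℝ, 0 ≤ a ∧ a ≤ 1 / 2 ∧ ((k : ℝ) + x) ^ 2 = a ^ 2 ∧
    ((k' : ℝ) + (x + 1 / 2)) ^ 2 = (1 / 2 - a) ^ 2 := by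
  have h := abs_sub_round x
  rcases le_total 0 (x - round x) with h0 | h0
  · refine ⟨-round x, -round x - 1, x - round x, h0, (le_abs_self _).trans h, ?_, ?_⟩ <;>
      push_cast <;> ring
  · refine ⟨-round x, -round x, -(x - round x), by linarith, (neg_le_abs _).trans h, ?_, ?_⟩ <;>
      push_cast <;> ring

lemma gP_ge {a : ℝ} (ha : 0 < a) (x : ℝ) (k : ℤ) :
    Real.exp (-π * ((k : ℝ) + x) ^ 2 * a) ≤ gP a x :=
  (gP_summable ha x).le_tsum k (fun _ _ => (Real.exp_pos _).le)

lemma th_direct_lower {α : ℝ} (hα : 0 < α) (x y : ℝ) :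
    Real.exp (-(π * α * hs / 3)) ≤ th α x y := by
  have hs0 := hs_pos
  have ha : 0 < α * hs := mul_pos hα hs_pos
  have ha3 : 0 < 3 * (α * hs) := by positivity
  obtain ⟨k, k', a, a0, a1, e1, e2⟩ := near_int x
  obtain ⟨m, m', b, b0, b1, e3, e4⟩ := near_int y
  have hc : 0 < π * (α * hs) := by positivity
  unfold th
  rcases cover_aux a0 a1 b0 b1 with h | h
  · have := mul_le_mul (gP_ge ha x k) (gP_ge ha3 y m) (Real.exp_pos _).le (gP_nonneg _ _)
    rw [← Real.exp_add, e1, e3] at this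
    have h2 := mul_nonneg (gP_nonneg (α * hs) (x + 1 / 2)) (gP_nonneg (3 * (α * hs)) (y + 1 / 2))
    refine le_trans (Real.exp_le_exp.2 ?_) (this.trans (by linarith))
    nlinarith [mul_le_mul_of_nonneg_left h hc.le]
  · have := mul_le_mul (gP_ge ha (x + 1 / 2) k') (gP_ge ha3 (y + 1 / 2) m') (Real.exp_pos _).le
      (gP_nonneg _ _)
    rw [← Real.exp_add, e2, e4] at this
    have h2 := mul_nonneg (gP_nonneg (α * hs) x) (gP_nonneg (3 * (α * hs)) y)
    refine le_trans (Real.exp_le_exp.2 ?_) (this.trans (by linarith))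
    nlinarith [mul_le_mul_of_nonneg_left h hc.le]

noncomputable def lowC (α : ℝ) : ℝ :=
  if α < 1.7 then (1 - 3 * Real.exp (-(π * hs / α)) - 13.2 * Real.exp (-(π * hs / α)) ^ 3) / α
  else Real.exp (-(π * α * hs / 3))

lemma R_small {α : ℝ} (hα : 0 < α) (h : α < 1.7) : Real.exp (-(π * hs / (2 * α))) ≤ 0.36 := by
  have h1 : 1.05 ≤ π * hs / (2 * α) := by
    rw [le_div_iff₀ (by positivity)]
    nlinarith [Real.pi_gt_d2, hs_gt]
  have h2 : Real.exp (-(π * hs / (2 * α))) ≤ Real.exp (-1.05) := Real.exp_le_exp.2 (by linarith)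
  refine h2.trans ?_
  rw [Real.exp_neg]
  have h3 : (2.8 : ℝ) ≤ Real.exp 1.05 := by
    rw [show (1.05 : ℝ) = 1 + 0.05 by norm_num, Real.exp_add]
    have := Real.add_one_le_exp (0.05 : ℝ)
    have := Real.exp_one_gt_d9
    nlinarith
  calc (Real.exp 1.05)⁻¹ ≤ (2.8 : ℝ)⁻¹ := by gcongr
    _ ≤ 0.36 := by norm_num

lemma R_sq (α : ℝ) :
    Real.exp (-(π * hs / α)) = Real.exp (-(π * hs / (2 * α))) ^ 2 := by
  rw [← Real.exp_nat_mul]; congr 1; push_cast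
  by_cases h : α = 0
  · simp [h]
  field_simp

lemma th_ge_lowC {α : ℝ} (hα : 0 < α) (x y : ℝ) : lowC α ≤ th α x y := by
  unfold lowC
  split_ifs with h
  · have hR := R_small hα h
    have hR0 := Real.exp_pos (-(π * hs / (2 * α)))
    have hQ : Real.exp (-(π * hs / α)) ≤ 0.36 := by rw [R_sq]; nlinarith
    have hb := (abs_le.1 (th_fourier_bound hα x y hQ)).1
    have hQ0 := Real.exp_pos (-(π * hs / α))
    set Q := Real.exp (-(π * hs / α))
    rw [div_le_iff₀ hα]
    have hc : Real.cos (4 * π * y) = 2 * Real.cos (2 * π * y) ^ 2 - 1 := by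
      rw [← Real.cos_two_mul]; ring_nf
    rw [hc] at hb
    have hx := Real.cos_sq_le_one (2 * π * x)
    set cx := Real.cos (2 * π * x)
    set cy := Real.cos (2 * π * y)
    have : 0 ≤ Q * (2 * (2 * cy ^ 2 - 1) + 4 * cx * cy + 3) :=
      mul_nonneg hQ0.le (by nlinarith [sq_nonneg (2 * cy + cx)])
    nlinarith
  · exact th_direct_lower hα x y

lemma upper_lt_lowC {α : ℝ} (hα : 0 < α) :
    th (2 * α) (1 / 2) (1 / 6) + th (2 * α) 1 (1 / 3) < lowC α := by
  rw [th_second, ← two_mul]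
  unfold lowC
  split_ifs with h
  · have hR := R_small hα h
    have hR0 := Real.exp_pos (-(π * hs / (2 * α)))
    have hb := (abs_le.1 (th_fourier_bound (α := 2 * α) (by positivity) (1 / 2) (1 / 6) hR)).2
    rw [R_sq]
    set R := Real.exp (-(π * hs / (2 * α)))
    have c1 : Real.cos (2 * π * (1 / 2)) = -1 := by
      rw [show 2 * π * (1 / 2) = π by ring, Real.cos_pi]
    have c2 : Real.cos (2 * π * (1 / 6)) = 1 / 2 := by
      rw [show 2 * π * (1 / 6) = π / 3 by ring, Real.cos_pi_div_three]
    have c3 : Real.cos (4 * π * (1 / 6)) = -(1 / 2) := by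
      rw [show 4 * π * (1 / 6) = 2 * (π / 3) by ring, Real.cos_two_mul, Real.cos_pi_div_three]
      norm_num
    rw [c1, c2, c3] at hb
    rw [lt_div_iff₀ hα]
    have key : 0 < R * (3 - 13.2 * R ^ 2 - 3 * R - 13.2 * R ^ 5) := by
      have r2 : R ^ 2 ≤ 0.36 ^ 2 := by gcongr
      have r5 : R ^ 5 ≤ 0.36 ^ 5 := by gcongr
      refine mul_pos hR0 ?_
      norm_num at *; linarith
    nlinarith
  · refine th_direct_upper hα ?_
    have h1 : 2 ≤ π * α * hs / 3 := by
      have : 3.61 ≤ π * hs := by nlinarith [Real.pi_gt_d2, hs_gt]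
      push Not at h
      nlinarith
    have h2 : Real.exp (-(π * α * hs / 3)) ≤ Real.exp (-2) := Real.exp_le_exp.2 (by linarith)
    refine h2.trans ?_
    rw [Real.exp_neg, one_div]
    have h3 : (7 : ℝ) ≤ Real.exp 2 := by
      rw [show (2 : ℝ) = 1 + 1 by norm_num, Real.exp_add]
      have := Real.exp_one_gt_d9
      nlinarith
    gcongr

lemma lowC_measurable : Measurable lowC := by
  unfold lowC
  exact Measurable.ite measurableSet_Iio (by fun_prop) (by fun_prop)

noncomputable def sg : ℝ := Real.sqrt (2 / Real.sqrt 3)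

lemma sg_sq : sg ^ 2 = hs := Real.sq_sqrt (by positivity)

lemma sg_pos : 0 < sg := by unfold sg; positivity

lemma vec2_add (a b c d : ℝ) : vec2 a b + vec2 c d = vec2 (a + c) (b + d) := by
  ext i; fin_cases i <;> simp [vec2]

lemma vec2_smul (t a b : ℝ) : t • vec2 a b = vec2 (t * a) (t * b) := by
  ext i; fin_cases i <;> simp [vec2]

lemma vec2_norm (a b : ℝ) : ‖vec2 a b‖ ^ 2 = a ^ 2 + b ^ 2 := by
  rw [EuclideanSpace.norm_sq_eq]; simp [vec2]

lemma vec2_inj {a b c d : ℝ} (h : vec2 a b = vec2 c d) : a = c ∧ b = d := by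
  constructor
  · simpa [vec2] using congrArg (fun v : EuclideanSpace ℝ (Fin 2) => v 0) h
  · simpa [vec2] using congrArg (fun v : EuclideanSpace ℝ (Fin 2) => v 1) h

lemma vec2_surj (z : EuclideanSpace ℝ (Fin 2)) : z = vec2 (z 0) (z 1) := by
  ext i; fin_cases i <;> simp [vec2]

lemma norm_form (u v x y : ℝ) :
    ‖sg • vec2 u (v * √3) + sg • vec2 x (y * √3)‖ ^ 2 = hs * ((u + x) ^ 2 + 3 * (v + y) ^ 2) := by
  rw [← smul_add, vec2_add, vec2_smul, vec2_norm, ← sg_sq]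
  have h3 : √3 ^ 2 = (3 : ℝ) := Real.sq_sqrt (by norm_num)
  linear_combination sg ^ 2 * (v + y) ^ 2 * h3

noncomputable def hexFun : (ℤ × ℤ) ⊕ (ℤ × ℤ) → hexLattice
  | Sum.inl (k, m) => ⟨sg • vec2 k (m * √3), k - m, 2 * m, by
      unfold sg; congr 2 <;> push_cast <;> ring⟩
  | Sum.inr (k, m) => ⟨sg • vec2 (k + 1 / 2) ((m + 1 / 2) * √3), k - m, 2 * m + 1, by
      unfold sg; congr 2 <;> push_cast <;> ring⟩

lemma hexFun_bij : Function.Bijective hexFun := by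
  have h3 : √3 ≠ (0 : ℝ) := by positivity
  have hinj : ∀ a b c d : ℝ, sg • vec2 a (b * √3) = sg • vec2 c (d * √3) → a = c ∧ b = d := by
    intro a b c d h
    obtain ⟨h1, h2⟩ := vec2_inj (smul_right_injective _ sg_pos.ne' h)
    exact ⟨h1, mul_right_cancel₀ h3 h2⟩
  have hpar : ∀ k k' : ℤ, (k : ℝ) ≠ k' + 1 / 2 := by
    intro k k' h
    have : (2 * k : ℝ) = 2 * k' + 1 := by linarith
    have : 2 * k = 2 * k' + 1 := by exact_mod_cast this
    omega
  constructor
  · rintro (⟨k, m⟩ | ⟨k, m⟩) (⟨k', m'⟩ | ⟨k', m'⟩) h <;>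
      obtain ⟨h1, h2⟩ := hinj _ _ _ _ (congrArg Subtype.val h)
    · have h1 : k = k' := by exact_mod_cast h1
      have h2 : m = m' := by exact_mod_cast h2
      rw [h1, h2]
    · exact absurd h1 (hpar _ _)
    · exact absurd h1.symm (hpar _ _)
    · have h1 : k = k' := by exact_mod_cast (add_right_cancel h1)
      have h2 : m = m' := by exact_mod_cast (add_right_cancel h2)
      rw [h1, h2]
  · rintro ⟨p, k, l, rfl⟩
    rcases Int.even_or_odd' l with ⟨m, hm | hm⟩
    · refine ⟨Sum.inl (k + m, m), Subtype.ext ?_⟩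
      subst hm
      show sg • vec2 _ _ = sg • vec2 _ _
      congr 2 <;> push_cast <;> ring
    · refine ⟨Sum.inr (k + m, m), Subtype.ext ?_⟩
      subst hm
      show sg • vec2 _ _ = sg • vec2 _ _
      congr 2 <;> push_cast <;> ring

instance hexCountable : Countable hexLattice := hexFun_bij.surjective.countable

lemma prod_sum {a b : ℝ} (ha : 0 < a) (hb : 0 < b) (x y : ℝ) :
    ∑' p : ℤ × ℤ, ENNReal.ofReal (Real.exp (-π * ((p.1 : ℝ) + x) ^ 2 * a) *
      Real.exp (-π * ((p.2 : ℝ) + y) ^ 2 * b)) = ENNReal.ofReal (gP a x * gP b y) := by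
  rw [ENNReal.tsum_prod', ENNReal.ofReal_mul (gP_nonneg _ _)]
  simp_rw [ENNReal.ofReal_mul (Real.exp_pos _).le, ENNReal.tsum_mul_left, ENNReal.tsum_mul_right]
  unfold gP
  rw [ENNReal.ofReal_tsum_of_nonneg (fun _ => (Real.exp_pos _).le) (gP_summable ha x),
    ENNReal.ofReal_tsum_of_nonneg (fun _ => (Real.exp_pos _).le) (gP_summable hb y)]

lemma hex_sum {α : ℝ} (hα : 0 < α) (x y : ℝ) :
    ∑' l : hexLattice, ENNReal.ofReal (Real.exp (-(π * α) *
      ‖(l : EuclideanSpace ℝ (Fin 2)) + sg • vec2 x (y * √3)‖ ^ 2)) = ENNReal.ofReal (th α x y) := by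
  have ha : 0 < α * hs := mul_pos hα hs_pos
  have ha3 : 0 < 3 * (α * hs) := by positivity
  rw [← (Equiv.ofBijective _ hexFun_bij).tsum_eq]
  rw [Summable.tsum_sum ENNReal.summable ENNReal.summable]
  unfold th
  rw [ENNReal.ofReal_add (mul_nonneg (gP_nonneg _ _) (gP_nonneg _ _))
    (mul_nonneg (gP_nonneg _ _) (gP_nonneg _ _)), ← prod_sum ha ha3, ← prod_sum ha ha3]
  congr 1
  · congr 1; ext ⟨k, m⟩
    show ENNReal.ofReal (Real.exp (-(π * α) * ‖sg • vec2 k (m * √3) + _‖ ^ 2)) = _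
    rw [norm_form, ← Real.exp_add]; congr 2; ring
  · congr 1; ext ⟨k, m⟩
    show ENNReal.ofReal (Real.exp (-(π * α) *
      ‖sg • vec2 (k + 1 / 2) ((m + 1 / 2) * √3) + _‖ ^ 2)) = _
    rw [norm_form, ← Real.exp_add]; congr 2; simp only; ring

lemma hex_lower {α : ℝ} (hα : 0 < α) (z : EuclideanSpace ℝ (Fin 2)) :
    ENNReal.ofReal (lowC α) ≤ ∑' l : hexLattice, ENNReal.ofReal (Real.exp (-(π * α) *
      ‖(l : EuclideanSpace ℝ (Fin 2)) - z‖ ^ 2)) := by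
  have h0 := sg_pos
  have h3 : √3 ≠ (0 : ℝ) := by positivity
  have hz : ∀ p : EuclideanSpace ℝ (Fin 2),
      p - z = p + sg • vec2 (-(z 0) / sg) (-(z 1) / (sg * √3) * √3) := by
    intro p
    rw [sub_eq_add_neg, vec2_smul]
    congr 1
    have e1 : sg * (-(z 0) / sg) = -(z 0) := by field_simp
    have e2 : sg * (-(z 1) / (sg * √3) * √3) = -(z 1) := by field_simp
    rw [e1, e2]
    ext i; fin_cases i <;> simp [vec2]
  simp_rw [hz]
  rw [hex_sum hα]
  exact ENNReal.ofReal_le_ofReal (th_ge_lowC hα _ _)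

lemma deepHole_eq : deepHole = sg • vec2 (1 / 2) (1 / 6 * √3) := by
  have h3 : √3 ^ 2 = (3 : ℝ) := Real.sq_sqrt (by norm_num)
  have h3' : √3 ≠ (0 : ℝ) := by positivity
  unfold deepHole sg
  congr 2
  field_simp; linarith

noncomputable def honeyFun : hexLattice ⊕ hexLattice → honeycomb
  | Sum.inl l => ⟨Real.sqrt 2 • (l : EuclideanSpace ℝ (Fin 2)), _, Or.inl l.2, rfl⟩
  | Sum.inr l => ⟨Real.sqrt 2 • ((l : EuclideanSpace ℝ (Fin 2)) + deepHole), _,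
      Or.inr ⟨_, l.2, rfl⟩, rfl⟩

lemma honeyFun_surj : Function.Surjective honeyFun := by
  rintro ⟨p, q, hq | ⟨r, hr, rfl⟩, rfl⟩
  · exact ⟨Sum.inl ⟨q, hq⟩, rfl⟩
  · exact ⟨Sum.inr ⟨r, hr⟩, rfl⟩

instance honeyCountable : Countable honeycomb := honeyFun_surj.countable

lemma honey_upper {α : ℝ} (hα : 0 < α) :
    ∑' g : honeycomb, ENNReal.ofReal (Real.exp (-(π * α) *
      ‖(g : EuclideanSpace ℝ (Fin 2)) - -(Real.sqrt 2 • deepHole)‖ ^ 2)) ≤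
      ENNReal.ofReal (th (2 * α) (1 / 2) (1 / 6) + th (2 * α) 1 (1 / 3)) := by
  have h2 : √2 ^ 2 = (2 : ℝ) := Real.sq_sqrt (by norm_num)
  have thn : ∀ x y, 0 ≤ th (2 * α) x y := fun x y =>
    (Real.exp_pos _).le.trans (th_direct_lower (by positivity) x y)
  refine (ENNReal.tsum_le_tsum_comp_of_surjective honeyFun_surj _).trans (le_of_eq ?_)
  rw [Summable.tsum_sum ENNReal.summable ENNReal.summable, ENNReal.ofReal_add (thn _ _) (thn _ _),
    ← hex_sum (by positivity), ← hex_sum (by positivity)]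
  congr 1
  · congr 1; ext l
    show ENNReal.ofReal (Real.exp (-(π * α) *
      ‖Real.sqrt 2 • (l : EuclideanSpace ℝ (Fin 2)) - -(Real.sqrt 2 • deepHole)‖ ^ 2)) = _
    rw [sub_neg_eq_add, ← smul_add, norm_smul, mul_pow, Real.norm_eq_abs, sq_abs, h2, deepHole_eq]
    congr 2; ring
  · congr 1; ext l
    show ENNReal.ofReal (Real.exp (-(π * α) *
      ‖Real.sqrt 2 • ((l : EuclideanSpace ℝ (Fin 2)) + deepHole)
        - -(Real.sqrt 2 • deepHole)‖ ^ 2)) = _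
    rw [sub_neg_eq_add, ← smul_add, norm_smul, mul_pow, Real.norm_eq_abs, sq_abs, h2, deepHole_eq,
      add_assoc, ← smul_add, vec2_add]
    have e : vec2 (1 / 2 + 1 / 2) (1 / 6 * √3 + 1 / 6 * √3) = vec2 1 (1 / 3 * √3) := by
      congr 1 <;> ring
    rw [e]
    congr 2; ring

/-- For a completely monotone potential of squared distance, represented via
Bernstein–Widder as `f(r) = ∫_{(0,∞)} exp(−παr) dμ(α)` for a nonzero Borel measure `μ`
on `(0,∞)`, and assuming the honeycomb sums are finite, the polarization of the
hexagonal lattice strictly exceeds that of the honeycomb structure. -/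
theorem hex_polarization_gt_honeycomb_polarization_cm
    (μ : Measure (Set.Ioi (0 : ℝ))) (hμ : μ ≠ 0)
    (f : ℝ → ℝ≥0∞)
    (hf : ∀ r : ℝ, 0 ≤ r →
      f r = ∫⁻ a : Set.Ioi (0 : ℝ), ENNReal.ofReal (Real.exp (-(Real.pi * (a : ℝ)) * r)) ∂μ)
    (hfin : ∀ z : EuclideanSpace ℝ (Fin 2),
      (∑' g : honeycomb, f (‖(g : EuclideanSpace ℝ (Fin 2)) - z‖ ^ 2)) < ⊤) :
    (⨅ z : EuclideanSpace ℝ (Fin 2),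
        ∑' l : hexLattice, f (‖(l : EuclideanSpace ℝ (Fin 2)) - z‖ ^ 2)) >
    (⨅ z : EuclideanSpace ℝ (Fin 2),
        ∑' g : honeycomb, f (‖(g : EuclideanSpace ℝ (Fin 2)) - z‖ ^ 2)) := by
  have hsum : ∀ (S : Set (EuclideanSpace ℝ (Fin 2))) [Countable S] (z : EuclideanSpace ℝ (Fin 2)),
      ∑' l : S, f (‖(l : EuclideanSpace ℝ (Fin 2)) - z‖ ^ 2) =
      ∫⁻ a : Set.Ioi (0 : ℝ), ∑' l : S, ENNReal.ofReal (Real.exp (-(Real.pi * (a : ℝ)) *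
        ‖(l : EuclideanSpace ℝ (Fin 2)) - z‖ ^ 2)) ∂μ := by
    intro S _ z
    rw [lintegral_tsum (fun l => by fun_prop)]
    congr 1; ext l
    exact hf _ (by positivity)
  refine lt_of_le_of_lt (iInf_le _ (-(Real.sqrt 2 • deepHole))) ?_
  have hlt : ∑' g : honeycomb, f (‖(g : EuclideanSpace ℝ (Fin 2)) - -(Real.sqrt 2 • deepHole)‖ ^ 2)
      < ∫⁻ a : Set.Ioi (0 : ℝ), ENNReal.ofReal (lowC a) ∂μ := by
    have hfin' := hfin (-(Real.sqrt 2 • deepHole))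
    rw [hsum] at hfin' ⊢
    refine lintegral_strict_mono hμ ?_ hfin'.ne (Filter.Eventually.of_forall fun a => ?_)
    · exact (lowC_measurable.comp measurable_subtype_coe).ennreal_ofReal.aemeasurable
    · have ha : 0 < (a : ℝ) := a.2
      refine (honey_upper ha).trans_lt ?_
      refine (ENNReal.ofReal_lt_ofReal_iff_of_nonneg ?_).2 (upper_lt_lowC ha)
      exact add_nonneg ((Real.exp_pos _).le.trans (th_direct_lower (by positivity) _ _))
        ((Real.exp_pos _).le.trans (th_direct_lower (by positivity) _ _))
  refine hlt.trans_le (le_iInf fun z => ?_)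
  rw [hsum]
  exact lintegral_mono fun a => hex_lower a.2 z
end

section
/- For every α > √3·log 5/π, it holds that ∑_{(k,l) ∈ ℤ²} exp(−(2πα/√3)·(k²+kl+l²))·cos(2π(k−l)/3) > ∑_{(k,l) ∈ ℤ²} exp(−(πα/√3)·(k²+kl+l²))·cos(2π(k−l)/3). -/
lemma aux_geom : HasSum (fun k : ℤ => ((1:ℝ)/5) ^ k.natAbs) (3/2) := by
  have h1 : HasSum (fun n : ℕ => ((1:ℝ)/5) ^ n) (5/4) := by
    have := hasSum_geometric_of_lt_one (r := (1:ℝ)/5) (by norm_num) (by norm_num)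
    convert this using 1; norm_num
  have h2 : HasSum (fun n : ℕ => ((1:ℝ)/5) ^ (n+1)) (1/4) := by
    have := h1.mul_left ((1:ℝ)/5)
    have e : (fun n : ℕ => ((1:ℝ)/5) ^ (n+1)) = fun n => (1:ℝ)/5 * (1/5)^n := by
      funext n; rw [pow_succ]; ring
    rw [e, show (1:ℝ)/4 = 1/5 * (5/4) by norm_num]
    exact this
  have := HasSum.of_nat_of_neg_add_one (f := fun k : ℤ => ((1:ℝ)/5) ^ k.natAbs)
    (m := 5/4) (m' := 1/4) (by simpa using h1) (by
      convert h2 using 2 with n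
      rw [show (-((n:ℤ)+1)).natAbs = n+1 by omega])
  convert this using 1; norm_num

lemma aux_geom2 :
    HasSum (fun p : ℤ × ℤ => ((1:ℝ)/5) ^ p.1.natAbs * ((1:ℝ)/5) ^ p.2.natAbs) (9/4) := by
  have hs := aux_geom.summable.mul_of_nonneg aux_geom.summable
    (fun k => by positivity) (fun k => by positivity)
  have := aux_geom.mul aux_geom hs
  rw [show (9:ℝ)/4 = 3/2 * (3/2) by norm_num]
  exact this

lemma aux_int (k l : ℤ) : |k| + |l| ≤ k^2 + k*l + l^2 + 1 := by
  have h1 : 2 * |k| ≤ k^2 + 1 := by nlinarith [sq_nonneg (|k| - 1), sq_abs k]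
  have h2 : 2 * |l| ≤ l^2 + 1 := by nlinarith [sq_nonneg (|l| - 1), sq_abs l]
  nlinarith [sq_nonneg (k + l)]

lemma aux_int2 (k l : ℤ) (h1 : ¬ (k = 1 ∧ l = -1)) (h2 : ¬ (k = -1 ∧ l = 1)) :
    |k| + |l| ≤ k^2 + k*l + l^2 := by
  by_contra hc
  have h := aux_int k l
  have h3 : |k| + |l| = k^2 + k*l + l^2 + 1 := by omega
  have e1 : 2 * |k| ≤ k^2 + 1 := by nlinarith [sq_nonneg (|k| - 1), sq_abs k]
  have e2 : 2 * |l| ≤ l^2 + 1 := by nlinarith [sq_nonneg (|l| - 1), sq_abs l]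
  have e3 : (k+l)^2 = 0 := by nlinarith [sq_nonneg (k + l)]
  have e4 : l = -k := by have := pow_eq_zero_iff (two_ne_zero) |>.1 e3; omega
  subst e4
  have e5 : (|k| - 1)^2 = 0 := by
    rw [abs_neg] at h3
    nlinarith [sq_abs k]
  have e6 : |k| = 1 := by have := pow_eq_zero_iff (two_ne_zero) |>.1 e5; omega
  rcases (abs_eq (by norm_num)).1 e6 with h | h <;> subst h <;> simp_all

/-- the kernel bound -/
lemma aux_exp (c : ℝ) (hc : Real.log 5 ≤ c) (k l : ℤ) :
    Real.exp (-c * ((k:ℝ)^2 + (k:ℝ)*(l:ℝ) + (l:ℝ)^2)) ≤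
      5 * (((1:ℝ)/5) ^ k.natAbs * ((1:ℝ)/5) ^ l.natAbs) := by
  have h5 : (0:ℝ) < Real.log 5 := Real.log_pos (by norm_num)
  have hQ : (0:ℝ) ≤ (k:ℝ)^2 + (k:ℝ)*(l:ℝ) + (l:ℝ)^2 := by
    nlinarith [sq_nonneg ((k:ℝ)+l), sq_nonneg (k:ℝ), sq_nonneg (l:ℝ)]
  have h := aux_int k l
  have h' : ((k.natAbs + l.natAbs : ℕ) : ℝ) ≤ (k:ℝ)^2 + (k:ℝ)*(l:ℝ) + (l:ℝ)^2 + 1 := by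
    have : ((k.natAbs + l.natAbs : ℕ) : ℤ) ≤ k^2 + k*l + l^2 + 1 := by
      push_cast; exact h
    have t := (Int.cast_le (R := ℝ)).2 this
    rw [Int.cast_natCast] at t
    exact t.trans (le_of_eq (by push_cast; ring))
  have e : 5 * (((1:ℝ)/5) ^ k.natAbs * ((1:ℝ)/5) ^ l.natAbs) =
      Real.exp (-Real.log 5 * (((k.natAbs + l.natAbs : ℕ) : ℝ) - 1)) := by
    rw [← pow_add, show -Real.log 5 * (((k.natAbs + l.natAbs : ℕ) : ℝ) - 1) =
      Real.log 5 + ((k.natAbs + l.natAbs : ℕ) : ℝ) * (-Real.log 5) by ring, Real.exp_add,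
      Real.exp_nat_mul, Real.exp_neg, Real.exp_log (by norm_num)]
    norm_num
  rw [e, Real.exp_le_exp]
  nlinarith

lemma aux_exp2 (c : ℝ) (hc : Real.log 5 ≤ c) (k l : ℤ) (h0 : ¬ (k = 0 ∧ l = 0))
    (h1 : ¬ (k = 1 ∧ l = -1)) (h2 : ¬ (k = -1 ∧ l = 1)) :
    Real.exp (-c * ((k:ℝ)^2 + (k:ℝ)*(l:ℝ) + (l:ℝ)^2)) ≤
      5 * Real.exp (-c) * (((1:ℝ)/5) ^ k.natAbs * ((1:ℝ)/5) ^ l.natAbs) := by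
  have h5 : (0:ℝ) < Real.log 5 := Real.log_pos (by norm_num)
  have h := aux_int2 k l h1 h2
  have h' : ((k.natAbs + l.natAbs : ℕ) : ℝ) ≤ (k:ℝ)^2 + (k:ℝ)*(l:ℝ) + (l:ℝ)^2 := by
    have : ((k.natAbs + l.natAbs : ℕ) : ℤ) ≤ k^2 + k*l + l^2 := by
      push_cast; exact h
    have t := (Int.cast_le (R := ℝ)).2 this
    rw [Int.cast_natCast] at t
    exact t.trans (le_of_eq (by push_cast; ring))
  have h'' : (1:ℝ) ≤ ((k.natAbs + l.natAbs : ℕ) : ℝ) := by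
    have : 1 ≤ k.natAbs + l.natAbs := by omega
    exact_mod_cast this
  have e : 5 * Real.exp (-c) * (((1:ℝ)/5) ^ k.natAbs * ((1:ℝ)/5) ^ l.natAbs) =
      Real.exp (-c + -Real.log 5 * (((k.natAbs + l.natAbs : ℕ) : ℝ) - 1)) := by
    rw [← pow_add, show -c + -Real.log 5 * (((k.natAbs + l.natAbs : ℕ) : ℝ) - 1) =
      Real.log 5 + -c + ((k.natAbs + l.natAbs : ℕ) : ℝ) * (-Real.log 5) by ring, Real.exp_add,
      Real.exp_add, Real.exp_nat_mul, Real.exp_neg (Real.log 5), Real.exp_log (by norm_num)]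
    norm_num
  rw [e, Real.exp_le_exp]
  nlinarith

lemma aux_cos1 : Real.cos (2 * Real.pi / 3) = -1/2 := by
  rw [show 2 * Real.pi / 3 = Real.pi - Real.pi / 3 by ring, Real.cos_pi_sub, Real.cos_pi_div_three]
  norm_num

lemma aux_cos2 : Real.cos (4 * Real.pi / 3) = -1/2 := by
  rw [show 4 * Real.pi / 3 = Real.pi / 3 + Real.pi by ring, Real.cos_add_pi,
    Real.cos_pi_div_three]
  norm_num

lemma aux_summable (c : ℝ) (hc : Real.log 5 ≤ c) :
    Summable (fun p : ℤ × ℤ => Real.exp (-c *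
            ((p.1 : ℝ) ^ 2 + (p.1 : ℝ) * (p.2 : ℝ) + (p.2 : ℝ) ^ 2)) *
          Real.cos (2 * Real.pi * ((p.1 : ℝ) - (p.2 : ℝ)) / 3)) := by
  refine Summable.of_norm_bounded (aux_geom2.summable.mul_left 5) (fun p => ?_)
  rw [norm_mul, Real.norm_eq_abs, Real.norm_eq_abs, Real.abs_exp]
  calc _ ≤ Real.exp (-c * ((p.1 : ℝ) ^ 2 + (p.1 : ℝ) * (p.2 : ℝ) + (p.2 : ℝ) ^ 2)) * 1 := by
        gcongr; exact Real.abs_cos_le_one _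
    _ ≤ _ := by rw [mul_one]; exact aux_exp c hc p.1 p.2

lemma aux_main (c : ℝ) (hc : Real.log 5 < c) :
    (∑' p : ℤ × ℤ, Real.exp (-c *
            ((p.1 : ℝ) ^ 2 + (p.1 : ℝ) * (p.2 : ℝ) + (p.2 : ℝ) ^ 2)) *
          Real.cos (2 * Real.pi * ((p.1 : ℝ) - (p.2 : ℝ)) / 3)) <
    ∑' p : ℤ × ℤ, Real.exp (-(2 * c) *
            ((p.1 : ℝ) ^ 2 + (p.1 : ℝ) * (p.2 : ℝ) + (p.2 : ℝ) ^ 2)) *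
          Real.cos (2 * Real.pi * ((p.1 : ℝ) - (p.2 : ℝ)) / 3) := by
  have h5 : (0:ℝ) < Real.log 5 := Real.log_pos (by norm_num)
  have s1 := aux_summable c hc.le
  have s2 := aux_summable (2 * c) (by linarith)
  have s3 := aux_geom2.mul_left (5 * Real.exp (-c))
  have hr : Real.exp (-c) < 1/5 := by
    rw [show (1:ℝ)/5 = Real.exp (-Real.log 5) by
      rw [Real.exp_neg, Real.exp_log (by norm_num)]; norm_num, Real.exp_lt_exp]
    linarith
  have hr0 := Real.exp_pos (-c)
  have hs : Real.exp (-(2*c)) = Real.exp (-c) ^ 2 := by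
    rw [← Real.exp_nat_mul]; congr 1; push_cast; ring
  have hsub := (s2.sub s1).add s3.summable
  have key := hsub.sum_le_tsum
    ({(0,0), (1,0), (-1,0), (0,1), (0,-1), (1,-1), (-1,1)} : Finset (ℤ × ℤ)) (by
    rintro ⟨k, l⟩ hp
    simp only [Finset.mem_insert, Finset.mem_singleton, Prod.mk.injEq, not_or] at hp
    obtain ⟨h0, -, -, -, -, h1, h2⟩ := hp
    have hb := aux_exp2 c hc.le k l h0 h1 h2
    have hQ : (0:ℝ) ≤ (k:ℝ)^2 + (k:ℝ)*(l:ℝ) + (l:ℝ)^2 := by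
      nlinarith [sq_nonneg ((k:ℝ)+l), sq_nonneg (k:ℝ), sq_nonneg (l:ℝ)]
    have hm : Real.exp (-(2*c) * ((k:ℝ)^2 + (k:ℝ)*(l:ℝ) + (l:ℝ)^2)) ≤
        Real.exp (-c * ((k:ℝ)^2 + (k:ℝ)*(l:ℝ) + (l:ℝ)^2)) := by
      rw [Real.exp_le_exp]; nlinarith
    have hp := Real.exp_pos (-(2*c) * ((k:ℝ)^2 + (k:ℝ)*(l:ℝ) + (l:ℝ)^2))
    have hcos := Real.cos_le_one (2 * Real.pi * ((k : ℝ) - (l : ℝ)) / 3)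
    dsimp only
    nlinarith [mul_nonneg (sub_nonneg.2 hm) (sub_nonneg.2 hcos)])
  rw [(s2.sub s1).tsum_add s3.summable, s2.tsum_sub s1, s3.tsum_eq] at key
  have c2 : Real.cos (2 * Real.pi * 2 / 3) = -1/2 := by
    rw [← aux_cos2]; congr 1; ring
  have c3 : Real.cos (-(2 * Real.pi * 2) / 3) = -1/2 := by
    rw [← aux_cos2, ← Real.cos_neg]; congr 1; ring
  have c4 : Real.cos (-(2 * Real.pi) / 3) = -1/2 := by
    rw [← aux_cos1, ← Real.cos_neg]; congr 1; ring
  have c5 : Real.cos (2 * Real.pi * 1 / 3) = -1/2 := by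
    rw [← aux_cos1]; congr 1; ring
  repeat rw [Finset.sum_insert (by decide)] at key
  rw [Finset.sum_singleton] at key
  norm_num [-neg_mul, -mul_neg, -mul_one] at key
  norm_num [c2, c3, c4, c5, aux_cos1, hs] at key
  simp only [neg_mul]
  nlinarith

/-- For `α > √3·log 5/π`, the signed theta series satisfies `b(q) > b(q^{1/2})`
with `q = e^{−2πα/√3}`. -/
theorem signed_theta_ineq (α : ℝ) (hα : α > Real.sqrt 3 * Real.log 5 / Real.pi) :
    (∑' p : ℤ × ℤ,
        Real.exp (-(2 * Real.pi * α / Real.sqrt 3) *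
            ((p.1 : ℝ) ^ 2 + (p.1 : ℝ) * (p.2 : ℝ) + (p.2 : ℝ) ^ 2)) *
          Real.cos (2 * Real.pi * ((p.1 : ℝ) - (p.2 : ℝ)) / 3)) >
      ∑' p : ℤ × ℤ,
        Real.exp (-(Real.pi * α / Real.sqrt 3) *
            ((p.1 : ℝ) ^ 2 + (p.1 : ℝ) * (p.2 : ℝ) + (p.2 : ℝ) ^ 2)) *
          Real.cos (2 * Real.pi * ((p.1 : ℝ) - (p.2 : ℝ)) / 3) := by
  have h3 : (0:ℝ) < Real.sqrt 3 := Real.sqrt_pos.2 (by norm_num)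
  have hc : Real.log 5 < Real.pi * α / Real.sqrt 3 := by
    rw [gt_iff_lt, div_lt_iff₀ Real.pi_pos] at hα
    rw [lt_div_iff₀ h3]; linarith
  have := aux_main _ hc
  rw [show 2 * (Real.pi * α / Real.sqrt 3) = 2 * Real.pi * α / Real.sqrt 3 by ring] at this
  exact this
end
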